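/- Let n ≥ 1 and let f be a cluster-additive function on ℤA_n. Then f is σ-invariant: f(σ(z)) = f(z) for every vertex z of ℤA_n. -/

import Mathlib

/-- A function on the vertices of `ℤA_n` (pairs `(i,p)` with `1 ≤ p ≤ n`) is
cluster-additive if every mesh relation holds, where `t⁺ = max t 0`. -/
def ZAClusterAdditive (n : ℤ) (f : ℤ × ℤ → ℤ) : Prop :=
  ∀ i p : ℤ, 1 ≤ p → p ≤ n →
    f (i, p) + f (i - 1, p) =
      (if 2 ≤ p then max (f (i, p - 1)) 0 else 0) +
      (if p ≤ n - 1 then max (f (i - 1, p + 1)) 0 else 0)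

/-- The translation-quiver automorphism `σ(i,p) = (i+p+1, n+1−p)` of `ℤA_n`,
realizing the functor `F = τ⁻¹[1]`. -/
def ZASigma (n : ℤ) (v : ℤ × ℤ) : ℤ × ℤ := (v.1 + v.2 + 1, n + 1 - v.2)

/-!
A tropical frieze on the `(n+3)`-gon assigns a weight to every pair of vertices, subject to the
tropical Ptolemy relations. Reading a vertex `(i,p)` of `ℤA_n` as the diagonal `{i, i+p+1}`, its
tropical cross-ratios form a cluster-additive function, which is `σ`-invariant because `σ` only
exchanges the two ends of the diagonal. A cluster-additive function is determined to the right of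
a row by its values on that row, and these values can be prescribed by a frieze in which
all edges at one vertex have weight zero.
-/

section IntervalMax

variable {α : Type*} [SemilatticeSup α]

/-- The maximum of `s a, s (a + 1), …, s (b - 1)`, for `a < b`; it is `s a` if `b ≤ a`. -/
def intervalMax (s : ℤ → α) (a b : ℤ) : α :=
  partialSups (fun k : ℕ => s (a + k)) (b - a - 1).toNat

lemma intervalMax_add_one (s : ℤ → α) (a : ℤ) : intervalMax s a (a + 1) = s a := by
  simp [intervalMax]

lemma intervalMax_add_one_right (s : ℤ → α) {a b : ℤ} (hab : a < b) :
    intervalMax s a (b + 1) = intervalMax s a b ⊔ s b := by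
  have hlength : (b + 1 - a - 1).toNat = (b - a - 1).toNat + 1 := by omega
  have hlast : a + ((b - a - 1).toNat + 1 : ℕ) = b := by omega
  simp only [intervalMax, hlength, partialSups_add_one, hlast]

lemma intervalMax_eq_sup_left (s : ℤ → α) {a b : ℤ} (hab : a + 1 < b) :
    intervalMax s a b = s a ⊔ intervalMax s (a + 1) b := by
  induction b, Int.add_one_le_of_lt hab using Int.leInduction with
  | base =>
    rw [intervalMax_add_one_right s (lt_add_one a), intervalMax_add_one, intervalMax_add_one]
  | succ b hb ih =>
    rw [intervalMax_add_one_right s (by omega), intervalMax_add_one_right s (by omega),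
      ih (by omega), sup_assoc]

end IntervalMax

section OrderedGroup

variable {G : Type*} [AddCommGroup G] [LinearOrder G] [IsOrderedAddMonoid G]

-- In a semiring this reads `(x + m) * (m + y) = m * (x + m + y) + x * y`.
lemma max_add_max_eq_max (x m y : G) :
    max x m + max m y = max (m + max x (max m y)) (x + y) := by
  grind

lemma intervalMax_ptolemy (s : ℤ → G) {a b : ℤ} (hab : a + 1 < b) :
    intervalMax s a b + intervalMax s (a + 1) (b + 1) =
      max (intervalMax s (a + 1) b + intervalMax s a (b + 1)) (s a + s b) := by
  rw [intervalMax_eq_sup_left s hab, intervalMax_eq_sup_left s (hab.trans (lt_add_one b)),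
    intervalMax_add_one_right s hab]
  exact max_add_max_eq_max _ _ _

end OrderedGroup

section CrossRatio

variable {G : Type*} [AddCommGroup G]

/-- The tropical cross-ratio of the quadrilateral `a, a+1, b, b+1` with edge weights `d`. -/
def tropicalCrossRatio (d : ℤ → ℤ → G) (a b : ℤ) : G :=
  d (a + 1) b + d a (b + 1) - (d a (a + 1) + d b (b + 1))

/-- The tropical analogue of `1 + x`, where `x` is the cross-ratio of the quadrilateral
`a, a+1, b, b+1` with edge weights `d`. -/
def tropicalOneAddCrossRatio (d : ℤ → ℤ → G) (a b : ℤ) : G :=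
  d a b + d (a + 1) (b + 1) - (d a (a + 1) + d b (b + 1))

lemma tropicalCrossRatio_mesh (d : ℤ → ℤ → G) (a b : ℤ) :
    tropicalCrossRatio d (a + 1) (b + 1) + tropicalCrossRatio d a b =
      tropicalOneAddCrossRatio d (a + 1) b + tropicalOneAddCrossRatio d a (b + 1) := by
  unfold tropicalCrossRatio tropicalOneAddCrossRatio
  abel

lemma tropicalOneAddCrossRatio_self_add_one (d : ℤ → ℤ → G) (a : ℤ) :
    tropicalOneAddCrossRatio d a (a + 1) = 0 :=
  sub_self _

end CrossRatio

section Polygon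

variable {G : Type*} [AddCommGroup G] [LinearOrder G]

/-- Cluster-additivity, for functions on `ℤA_n` with values in an ordered abelian group;
it is `ZAClusterAdditive` for integer-valued functions. -/
def IsClusterAdditive (n : ℤ) (f : ℤ × ℤ → G) : Prop :=
  ∀ i p : ℤ, 1 ≤ p → p ≤ n →
    f (i, p) + f (i - 1, p) =
      (if 2 ≤ p then max (f (i, p - 1)) 0 else 0) +
      (if p ≤ n - 1 then max (f (i - 1, p + 1)) 0 else 0)

namespace IsClusterAdditive

variable {n : ℤ} {f g : ℤ × ℤ → G}

lemma translate (hf : IsClusterAdditive n f) (c : ℤ) :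
    IsClusterAdditive n fun z => f (c + z.1, z.2) := by
  intro i p hp hpn
  simpa only [add_sub_assoc] using hf (c + i) p hp hpn

lemma eq_of_mesh_eq (hf : IsClusterAdditive n f) (hg : IsClusterAdditive n g) {i p : ℤ}
    (hp : 1 ≤ p) (hpn : p ≤ n) (hprev : ∀ q, 1 ≤ q → q ≤ n → f (i - 1, q) = g (i - 1, q))
    (hbelow : 2 ≤ p → f (i, p - 1) = g (i, p - 1)) : f (i, p) = g (i, p) := by
  have hmesh : f (i, p) + f (i - 1, p) = g (i, p) + g (i - 1, p) := by
    rw [hf i p hp hpn, hg i p hp hpn]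
    congr 1
    · exact if_ctx_congr Iff.rfl (fun h => by rw [hbelow h]) fun _ => rfl
    · exact if_ctx_congr Iff.rfl (fun h => by rw [hprev _ (by omega) (by omega)]) fun _ => rfl
  rwa [hprev p hp hpn, add_left_inj] at hmesh

lemma eq_of_eq_on_row (hf : IsClusterAdditive n f) (hg : IsClusterAdditive n g) {c : ℤ}
    (hrow : ∀ p, 1 ≤ p → p ≤ n → f (c, p) = g (c, p)) {i p : ℤ} (hi : c ≤ i) (hp : 1 ≤ p)
    (hpn : p ≤ n) : f (i, p) = g (i, p) := by
  induction i, hi using Int.leInduction generalizing p with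
  | base => exact hrow p hp hpn
  | succ i _ ih =>
    have hprev (q : ℤ) (hq : 1 ≤ q) (hqn : q ≤ n) : f (i + 1 - 1, q) = g (i + 1 - 1, q) := by
      rw [add_sub_cancel_right, ih hq hqn]
    induction p, hp using Int.leInduction with
    | base => exact hf.eq_of_mesh_eq hg le_rfl hpn hprev (by omega)
    | succ p hp ihp =>
      refine hf.eq_of_mesh_eq hg (by omega) hpn hprev fun _ => ?_
      rw [add_sub_cancel_right, ihp (by omega)]

end IsClusterAdditive

/-- The tropical Ptolemy relation for the quadrilateral `a, a+1, b, b+1` with edge weights `d`. -/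
def TropicalPtolemy (d : ℤ → ℤ → G) (a b : ℤ) : Prop :=
  d a b + d (a + 1) (b + 1) = max (d (a + 1) b + d a (b + 1)) (d a (a + 1) + d b (b + 1))

lemma tropicalPtolemy_comm {d : ℤ → ℤ → G} (hd : ∀ a b, d a b = d b a) (a b : ℤ) :
    TropicalPtolemy d a b ↔ TropicalPtolemy d b a := by
  simp only [TropicalPtolemy, hd b a, hd (b + 1) (a + 1), hd (b + 1) a, hd b (a + 1),
    add_comm (d a (b + 1)), add_comm (d b (b + 1))]

/-- A tropical frieze on the `N`-gon with vertex set `ℤ/N`: a symmetric weight on pairs of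
vertices satisfying the Ptolemy relations for two disjoint sides. The vertices are encoded by
integers, the weights being `N`-periodic. -/
structure IsTropicalFrieze (N : ℤ) (d : ℤ → ℤ → G) : Prop where
  symm (a b : ℤ) : d a b = d b a
  add_period (a b : ℤ) : d a (b + N) = d a b
  ptolemy {a b : ℤ} (hab : a + 2 ≤ b) (hba : b + 2 ≤ a + N) : TropicalPtolemy d a b

namespace IsTropicalFrieze

variable {N n : ℤ} {d : ℤ → ℤ → G}

lemma tropicalCrossRatio_comm (hd : IsTropicalFrieze N d) (a b : ℤ) :
    tropicalCrossRatio d a b = tropicalCrossRatio d b a := by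
  simp only [tropicalCrossRatio, hd.symm (a + 1) b, hd.symm a (b + 1)]
  abel

lemma tropicalCrossRatio_add_period (hd : IsTropicalFrieze N d) (a b : ℤ) :
    tropicalCrossRatio d a (b + N) = tropicalCrossRatio d a b := by
  simp only [tropicalCrossRatio, add_right_comm b N 1, hd.add_period, hd.symm (b + N),
    hd.symm (b + 1) b]

lemma tropicalOneAddCrossRatio_pred_add_period (hd : IsTropicalFrieze N d) (a : ℤ) :
    tropicalOneAddCrossRatio d a (a - 1 + N) = 0 := by
  simp only [tropicalOneAddCrossRatio, add_right_comm _ N 1, sub_add_cancel, hd.add_period,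
    hd.symm (a - 1 + N), hd.symm (a + 1) a, hd.symm a (a - 1)]
  abel

variable [IsOrderedAddMonoid G]

lemma max_tropicalCrossRatio_zero (hd : IsTropicalFrieze N d) {a b : ℤ} (hab : a + 2 ≤ b)
    (hba : b + 2 ≤ a + N) :
    max (tropicalCrossRatio d a b) 0 = tropicalOneAddCrossRatio d a b := by
  rw [tropicalCrossRatio, tropicalOneAddCrossRatio, hd.ptolemy hab hba, ← max_sub_sub_right,
    sub_self]

theorem isClusterAdditive (hd : IsTropicalFrieze (n + 3) d) :
    IsClusterAdditive n fun z => tropicalCrossRatio d z.1 (z.1 + z.2 + 1) := by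
  intro i p hp hpn
  have hleft : (if 2 ≤ p then max (tropicalCrossRatio d i (i + p)) 0 else 0) =
      tropicalOneAddCrossRatio d i (i + p) := by
    split_ifs with h
    · exact hd.max_tropicalCrossRatio_zero (by omega) (by omega)
    · obtain rfl : p = 1 := by omega
      exact (tropicalOneAddCrossRatio_self_add_one d i).symm
  have hright : (if p ≤ n - 1 then max (tropicalCrossRatio d (i - 1) (i + p + 1)) 0 else 0) =
      tropicalOneAddCrossRatio d (i - 1) (i + p + 1) := by
    split_ifs with h
    · exact hd.max_tropicalCrossRatio_zero (by omega) (by omega)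
    · obtain rfl : p = n := by omega
      rw [show i + p + 1 = i - 1 - 1 + (p + 3) by ring]
      exact (hd.tropicalOneAddCrossRatio_pred_add_period (i - 1)).symm
  have hmesh := tropicalCrossRatio_mesh d (i - 1) (i + p)
  rw [sub_add_cancel, ← hleft, ← hright] at hmesh
  have hshift : i - 1 + p + 1 = i + p := by ring
  have hshift_left : i + (p - 1) + 1 = i + p := by ring
  have hshift_right : i - 1 + (p + 1) + 1 = i + p + 1 := by ring
  simpa only [hshift, hshift_left, hshift_right] using hmesh

end IsTropicalFrieze

section FanWeight

variable {N a b : ℤ}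

/-- The weights on the edges of the `N`-gon that vanish on all edges at the vertex `0` and give
every edge `{a, b}` with `0 < a < b < N` the maximum of the weights `s k` of the sides
`{k, k + 1}` with `a ≤ k < b`. -/
def fanWeight (N : ℤ) (s : ℤ → G) (a b : ℤ) : G :=
  if a % N = 0 ∨ b % N = 0 then 0
  else intervalMax s (min (a % N) (b % N)) (max (a % N) (b % N))

lemma fanWeight_comm (N : ℤ) (s : ℤ → G) (a b : ℤ) : fanWeight N s a b = fanWeight N s b a := by
  simp only [fanWeight, or_comm, min_comm, max_comm]

lemma fanWeight_congr (s : ℤ → G) {a' b' : ℤ} (ha : a ≡ a' [ZMOD N]) (hb : b ≡ b' [ZMOD N]) :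
    fanWeight N s a b = fanWeight N s a' b' := by
  simp only [fanWeight, ha.eq, hb.eq]

lemma tropicalPtolemy_fanWeight_congr (s : ℤ → G) {a' b' : ℤ} (ha : a ≡ a' [ZMOD N])
    (hb : b ≡ b' [ZMOD N]) :
    TropicalPtolemy (fanWeight N s) a b ↔ TropicalPtolemy (fanWeight N s) a' b' := by
  have ha_succ := ha.add_right 1
  have hb_succ := hb.add_right 1
  rw [TropicalPtolemy, fanWeight_congr s ha hb, fanWeight_congr s ha_succ hb_succ,
    fanWeight_congr s ha_succ hb, fanWeight_congr s ha hb_succ, fanWeight_congr s ha ha_succ,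
    fanWeight_congr s hb hb_succ, TropicalPtolemy]

lemma fanWeight_zero_left (N : ℤ) (s : ℤ → G) (b : ℤ) : fanWeight N s 0 b = 0 := by
  simp [fanWeight]

lemma fanWeight_period_right (N : ℤ) (s : ℤ → G) (a : ℤ) : fanWeight N s a N = 0 := by
  simp [fanWeight]

lemma fanWeight_of_lt (s : ℤ → G) (ha : 0 < a) (hab : a < b) (hb : b < N) :
    fanWeight N s a b = intervalMax s a b := by
  rw [fanWeight, Int.emod_eq_of_lt ha.le (hab.trans hb), Int.emod_eq_of_lt (ha.trans hab).le hb,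
    if_neg (by omega), min_eq_left hab.le, max_eq_right hab.le]

lemma fanWeight_add_one (s : ℤ → G) (ha : 0 < a) (haN : a + 1 < N) :
    fanWeight N s a (a + 1) = s a := by
  rw [fanWeight_of_lt s ha (lt_add_one a) haN, intervalMax_add_one]

variable [IsOrderedAddMonoid G]

lemma fanWeight_ptolemy_of_nonneg (s : ℤ → G) (ha : 0 ≤ a) (hab : a + 2 ≤ b) (hbN : b < N)
    (hba : b + 2 ≤ a + N) : TropicalPtolemy (fanWeight N s) a b := by
  unfold TropicalPtolemy
  rcases ha.eq_or_lt with rfl | ha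
  · simp only [fanWeight_zero_left, zero_add, add_zero]
    rw [fanWeight_of_lt s one_pos (by omega) (by omega), fanWeight_of_lt s one_pos (by omega) hbN,
      fanWeight_add_one s (by omega) (by omega)]
    exact intervalMax_add_one_right s (by omega)
  rw [fanWeight_of_lt s ha (by omega) hbN, fanWeight_of_lt s (by omega) (by omega) hbN,
    fanWeight_add_one s ha (by omega)]
  rcases (Int.add_one_le_of_lt hbN).eq_or_lt with rfl | hbN
  · simp only [fanWeight_period_right, add_zero]
    rw [intervalMax_eq_sup_left s (by omega)]
    exact sup_comm _ _
  · rw [fanWeight_of_lt s (by omega) (by omega) hbN, fanWeight_of_lt s ha (by omega) hbN,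
      fanWeight_add_one s (by omega) hbN]
    exact intervalMax_ptolemy s (by omega)

lemma fanWeight_ptolemy (s : ℤ → G) (hab : a + 2 ≤ b) (hba : b + 2 ≤ a + N) :
    TropicalPtolemy (fanWeight N s) a b := by
  have hN : 0 < N := by omega
  have hr := Int.emod_nonneg a hN.ne'
  have hrN := Int.emod_lt_of_pos a hN
  have ha : a ≡ a % N [ZMOD N] := (Int.mod_modEq a N).symm
  have hb : b ≡ a % N + (b - a) [ZMOD N] := by simpa using ha.add_right (b - a)
  rw [tropicalPtolemy_fanWeight_congr s ha hb]
  rcases lt_or_ge (a % N + (b - a)) N with hlt | hge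
  · exact fanWeight_ptolemy_of_nonneg s hr (by omega) hlt (by omega)
  · have hwrap : a % N + (b - a) ≡ a % N + (b - a) - N [ZMOD N] := by simp
    rw [tropicalPtolemy_fanWeight_congr s rfl hwrap, tropicalPtolemy_comm (fanWeight_comm N s)]
    exact fanWeight_ptolemy_of_nonneg s (by omega) (by omega) hrN (by omega)

theorem isTropicalFrieze_fanWeight (N : ℤ) (s : ℤ → G) : IsTropicalFrieze N (fanWeight N s) where
  symm := fanWeight_comm N s
  add_period _ _ := fanWeight_congr s rfl (by simp)
  ptolemy := fanWeight_ptolemy s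

/-- Side weights for which the cross-ratios of `fanWeight` along the row `i = 0` are the
prescribed values `r p`. Solving for `s (p + 1)` in terms of the maximum of `s 1, …, s p` gives a
recursion for that maximum, whose solution is the sum below. -/
noncomputable def fanSide (r : ℤ → G) (k : ℤ) : G :=
  if k ≤ 1 then 0 else (∑ j ∈ Finset.Ico 1 (k - 1), max (-r j) 0) - r (k - 1)

lemma intervalMax_fanSide (r : ℤ → G) {p : ℤ} (hp : 1 ≤ p) :
    intervalMax (fanSide r) 1 (p + 1) = ∑ j ∈ Finset.Ico 1 p, max (-r j) 0 := by
  induction p, hp using Int.leInduction with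
  | base =>
    rw [intervalMax_add_one, fanSide, if_pos le_rfl, Finset.Ico_self, Finset.sum_empty]
  | succ p hp ih =>
    rw [intervalMax_add_one_right _ (by omega), ih, fanSide, if_neg (by omega),
      add_sub_cancel_right, ← Finset.sum_Ico_add_eq_sum_Ico_add_one hp, ← max_add_add_left,
      add_zero, sub_eq_add_neg, sup_comm]

lemma tropicalCrossRatio_fanWeight_fanSide (r : ℤ → G) {p : ℤ} (hp : 1 ≤ p) (hpN : p + 2 < N) :
    tropicalCrossRatio (fanWeight N (fanSide r)) 0 (p + 1) = r p := by
  rw [tropicalCrossRatio, fanWeight_zero_left, fanWeight_zero_left, zero_add,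
    fanWeight_of_lt _ one_pos (by omega) (by omega), fanWeight_add_one _ (by omega) (by omega),
    intervalMax_fanSide r hp, fanSide, if_neg (by omega), add_sub_cancel_right]
  abel

theorem exists_isTropicalFrieze_of_row (n : ℤ) (r : ℤ → G) :
    ∃ d : ℤ → ℤ → G, IsTropicalFrieze (n + 3) d ∧
      ∀ p, 1 ≤ p → p ≤ n → tropicalCrossRatio d 0 (p + 1) = r p :=
  ⟨fanWeight (n + 3) (fanSide r), isTropicalFrieze_fanWeight _ _, fun _ hp hpn =>
    tropicalCrossRatio_fanWeight_fanSide r hp (by omega)⟩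

end FanWeight

end Polygon

theorem stmt_19_general {G : Type*} [AddCommGroup G] [LinearOrder G] [IsOrderedAddMonoid G]
    (n : ℤ) (f : ℤ × ℤ → G) (hf : IsClusterAdditive n f) :
    ∀ z : ℤ × ℤ, 1 ≤ z.2 → z.2 ≤ n → f (ZASigma n z) = f z := by
  rintro ⟨i, p⟩ hp hpn
  obtain ⟨d, hd, hrow⟩ := exists_isTropicalFrieze_of_row n fun q => f (i, q)
  have hfd {j q : ℤ} (hj : 0 ≤ j) (hq : 1 ≤ q) (hqn : q ≤ n) :
      f (i + j, q) = tropicalCrossRatio d j (j + q + 1) := by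
    refine (hf.translate i).eq_of_eq_on_row hd.isClusterAdditive (fun q hq hqn => ?_) hj hq hqn
    simpa using (hrow q hq hqn).symm
  calc f (i + p + 1, n + 1 - p)
      = f (i + (p + 1), n + 1 - p) := by rw [add_assoc]
    _ = tropicalCrossRatio d (p + 1) (p + 1 + (n + 1 - p) + 1) :=
        hfd (by omega) (by omega) (by omega)
    _ = tropicalCrossRatio d (p + 1) (0 + (n + 3)) := by congr 1; ring
    _ = tropicalCrossRatio d 0 (p + 1) := by
        rw [hd.tropicalCrossRatio_add_period, hd.tropicalCrossRatio_comm]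
    _ = f (i, p) := hrow p hp hpn

theorem stmt_19 (n : ℤ) (hn : 1 ≤ n) (f : ℤ × ℤ → ℤ)
    (hca : ZAClusterAdditive n f) :
    ∀ z : ℤ × ℤ, 1 ≤ z.2 → z.2 ≤ n → f (ZASigma n z) = f z :=
  stmt_19_general n f hca
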